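/- The real algebraic numbers satisfy the identity √(√15 + ψ) · √(√10 + √φ) = (φ* / (2^(7/4) · 5^(1/4))) · √(√3 − 1) · √(√5 + √3) · (√3 + 2 + ψ), where φ = 5 + √5, φ* = 5 − √5, and ψ = √(5 + 2√5). -/

import Mathlib

open Real

/-!
Both sides are nonnegative, so it suffices to compare squares. The fractional powers contribute
`(2 ^ (7/4) * 5 ^ (1/4)) ^ 2 = 8 * √10`, and since `2 * (5 + √5) = (√5 - 1) ^ 2 * (5 + 2 * √5)`,
multiplying `√10 + √(5 + √5)` by this `√10` leaves `10 + (5 - √5) * ψ`, where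
`ψ = √(5 + 2 * √5)`. What remains is an identity in `ℚ(√3, √5, ψ)`, and it is a formal
consequence of the defining equations of the three generators.
-/

lemma eight_mul_add_mul_add_eq {R : Type*} [CommRing R] {r s p : R}
    (hr : r ^ 2 = 3) (hs : s ^ 2 = 5) (hp : p ^ 2 = 5 + 2 * s) :
    8 * ((r * s + p) * (10 + (5 - s) * p)) =
      (5 - s) ^ 2 * (r - 1) * (s + r) * (r + 2 + p) ^ 2 := by
  have sq_five_sub : (5 - s) ^ 2 = 10 * (3 - s) := by
    linear_combination hs
  have sub_one_mul_sq : (r - 1) * (r + 2 + p) ^ 2 = 2 * (4 * r + (r - 1) * s + (r + 1) * p) := by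
    linear_combination (r + 3 + 2 * p) * hr + (r - 1) * hp
  calc 8 * ((r * s + p) * (10 + (5 - s) * p))
      = 40 * (2 * r * s + s + 3 + (r * s - r + 2) * p) := by
        linear_combination 8 * (5 - s) * hp - (8 * r * p + 16) * hs
    _ = 10 * (3 - s) * (s + r) * (2 * (4 * r + (r - 1) * s + (r + 1) * p)) := by
        linear_combination
          20 * ((6 + (r - 1) * s + (r + 1) * p) * hs - (3 - s) * (4 + s + p) * hr)
    _ = (5 - s) ^ 2 * (r - 1) * (s + r) * (r + 2 + p) ^ 2 := by
        rw [← sq_five_sub, ← sub_one_mul_sq]; ring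

lemma sqrt_two_mul_sqrt_five_add_sqrt_five :
    √2 * √(5 + √5) = (√5 - 1) * √(5 + 2 * √5) := by
  have one_le_sqrt_five : 1 ≤ √5 := one_le_sqrt.2 (by norm_num)
  have sq_sqrt_five : √5 ^ 2 = 5 := sq_sqrt (by norm_num)
  calc √2 * √(5 + √5) = √(2 * (5 + √5)) := (sqrt_mul zero_le_two _).symm
    _ = √((√5 - 1) ^ 2 * (5 + 2 * √5)) := by
        congr 1; linear_combination (-1 - 2 * √5) * sq_sqrt_five
    _ = (√5 - 1) * √(5 + 2 * √5) := by
        rw [sqrt_mul (sq_nonneg _), sqrt_sq (sub_nonneg.2 one_le_sqrt_five)]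

lemma sqrt_ten_mul_sqrt_ten_add :
    √10 * (√10 + √(5 + √5)) = 10 + (5 - √5) * √(5 + 2 * √5) := by
  have sqrt_ten : √10 = √5 * √2 := by
    rw [← sqrt_mul (by norm_num)]; norm_num
  calc √10 * (√10 + √(5 + √5)) = √10 ^ 2 + √5 * (√2 * √(5 + √5)) := by
        rw [sqrt_ten]; ring
    _ = 10 + √5 * ((√5 - 1) * √(5 + 2 * √5)) := by
        rw [sq_sqrt (by norm_num), sqrt_two_mul_sqrt_five_add_sqrt_five]
    _ = 10 + (5 - √5) * √(5 + 2 * √5) := by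
        linear_combination √(5 + 2 * √5) * sq_sqrt (show (0 : ℝ) ≤ 5 by norm_num)

lemma rpow_div_four_sq {x : ℝ} (hx : 0 ≤ x) (y : ℝ) : (x ^ (y / 4)) ^ 2 = √x ^ y := by
  rw [← rpow_mul_natCast hx, ← rpow_div_two_eq_sqrt y hx]
  congr 1
  push_cast
  ring

lemma two_rpow_mul_five_rpow_sq :
    ((2 : ℝ) ^ ((7 : ℝ) / 4) * (5 : ℝ) ^ ((1 : ℝ) / 4)) ^ 2 = 8 * √10 := by
  have sqrt_two_pow : √2 ^ 7 = 8 * √2 := by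
    calc √2 ^ 7 = (√2 ^ 2) ^ 3 * √2 := by ring
      _ = 8 * √2 := by rw [sq_sqrt zero_le_two]; norm_num
  rw [mul_pow, rpow_div_four_sq zero_le_two, rpow_div_four_sq (by norm_num), rpow_one,
    rpow_ofNat, sqrt_two_pow, mul_assoc, ← sqrt_mul zero_le_two]
  norm_num

lemma sqrt_fifteen_add_mul_sqrt_ten_add :
    (√15 + √(5 + 2 * √5)) * (√10 + √(5 + √5)) =
      (5 - √5) ^ 2 * (√3 - 1) * (√5 + √3) * (√3 + 2 + √(5 + 2 * √5)) ^ 2 / (8 * √10) := by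
  have sqrt_fifteen : √15 = √3 * √5 := by
    rw [← sqrt_mul (by norm_num)]; norm_num
  rw [eq_div_iff (by positivity), ← eight_mul_add_mul_add_eq (sq_sqrt (by norm_num))
    (sq_sqrt (by norm_num)) (sq_sqrt (by positivity)), ← sqrt_ten_mul_sqrt_ten_add, sqrt_fifteen]
  ring

theorem sqrt_product_identity :
    Real.sqrt (Real.sqrt 15 + Real.sqrt (5 + 2 * Real.sqrt 5)) *
        Real.sqrt (Real.sqrt 10 + Real.sqrt (5 + Real.sqrt 5)) =
      ((5 - Real.sqrt 5) / ((2:ℝ) ^ ((7:ℝ)/4) * (5:ℝ) ^ ((1:ℝ)/4))) *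
        Real.sqrt (Real.sqrt 3 - 1) * Real.sqrt (Real.sqrt 5 + Real.sqrt 3) *
        (Real.sqrt 3 + 2 + Real.sqrt (5 + 2 * Real.sqrt 5)) := by
  have sqrt_three_sub_one_nonneg : 0 ≤ √3 - 1 := sub_nonneg.2 (one_le_sqrt.2 (by norm_num))
  have five_sub_sqrt_five_nonneg : 0 ≤ 5 - √5 :=
    sub_nonneg.2 (sqrt_le_self_iff.2 (.inr (by norm_num)))
  rw [← pow_left_inj₀ (by positivity) (by positivity) two_ne_zero]
  calc (√(√15 + √(5 + 2 * √5)) * √(√10 + √(5 + √5))) ^ 2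
      = (√15 + √(5 + 2 * √5)) * (√10 + √(5 + √5)) := by
        rw [mul_pow, sq_sqrt (by positivity), sq_sqrt (by positivity)]
    _ = (5 - √5) ^ 2 * (√3 - 1) * (√5 + √3) * (√3 + 2 + √(5 + 2 * √5)) ^ 2 / (8 * √10) :=
        sqrt_fifteen_add_mul_sqrt_ten_add
    _ = ((5 - √5) / ((2 : ℝ) ^ ((7 : ℝ) / 4) * (5 : ℝ) ^ ((1 : ℝ) / 4)) * √(√3 - 1) *
          √(√5 + √3) * (√3 + 2 + √(5 + 2 * √5))) ^ 2 := by
        rw [mul_pow, mul_pow, mul_pow, div_pow, two_rpow_mul_five_rpow_sq,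
          sq_sqrt sqrt_three_sub_one_nonneg, sq_sqrt (by positivity)]
        ring
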